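/- There exists an absolute constant C > 0 such that for every θ ∈ (0,1) and every positive integer n, ∫_{A} G(s,t,u,v) ds dt du dv ≤ C · n^{2-θ} θ^{-1} (1-θ)^{-3}, and there exists an absolute constant c > 0 such that this integral is ≥ c · n^{2-θ} θ^{-1} (1-θ)^{-3} whenever additionally n^{1-θ} ≥ 8; here A = { (s,t,u,v) ∈ (0,∞)⁴ : 0 < u < 1, n^{-1/2} ≤ v < 1, t < n^{1/4}, s ≥ u^{1/2} v^{1/2} t }. -/

import Mathlib

open MeasureTheory Set Real

/-- The integrand `G(s,t,u,v)` from the paper's computation of the completely 1-summing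
norm of the identity `OH_n → ℓ^n_p`, with `θ = 2/p'`. Here `p = (s, t, u, v)`. -/
noncomputable def G (θ : ℝ) (n : ℕ) (p : ℝ × ℝ × ℝ × ℝ) : ℝ :=
  (n : ℝ) ^ (2 : ℕ) * p.1 ^ (-1 - 2 * θ) * p.2.1 ^ (-1 - 2 * θ) *
    min (min (min ((n : ℝ)⁻¹ * p.1 ^ (4 : ℝ) * p.2.2.1 ^ (-2 : ℝ) * p.2.2.2 ^ (-2 : ℝ))
                  ((n : ℝ)⁻¹ * p.2.1 ^ (4 : ℝ)))
             (min (p.1 ^ (4 : ℝ) * p.2.2.1 ^ (-2 : ℝ)) (p.2.1 ^ (4 : ℝ) * p.2.2.2 ^ (-2 : ℝ))))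
        (min (min (p.2.2.1 ^ (-2 : ℝ) * p.2.2.2 ^ (-2 : ℝ)) (p.2.2.1 ^ (-2 : ℝ)))
             (min 1 (p.2.2.2 ^ (-2 : ℝ))))

/-- The region of integration. -/
def A (n : ℕ) : Set (ℝ × ℝ × ℝ × ℝ) :=
  {p | 0 < p.1 ∧ 0 < p.2.1 ∧ 0 < p.2.2.1 ∧ 0 < p.2.2.2 ∧ p.2.2.1 < 1 ∧ (n : ℝ) ^ (-(1/2) : ℝ) ≤ p.2.2.2 ∧ p.2.2.2 < 1 ∧ p.2.1 < (n : ℝ) ^ ((1:ℝ)/4) ∧ p.2.2.1 ^ ((1:ℝ)/2) * p.2.2.2 ^ ((1:ℝ)/2) * p.2.1 ≤ p.1}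

/-!
On `A n` the minimum in `G` is `n⁻¹ t⁴`, so the integrand is `n s ^ (-1 - 2θ) t ^ (3 - 2θ)`.
Integrating over `s ≥ u ^ (1/2) v ^ (1/2) t` leaves
`n / (2θ) · t ^ (3 - 4θ) u ^ (-θ) v ^ (-θ)` on a product of three intervals. The integral thus
equals `(1 - n ^ (-(1 - θ) / 2)) / 8 · n ^ (2 - θ) θ⁻¹ (1 - θ)⁻³`; the prefactor is at most `1/8`,
and it is at least `1/16` once `n ^ (1 - θ) ≥ 4`.
-/

section FibrewiseIntegral

variable {α β : Type*} [MeasurableSpace α] [MeasurableSpace β] {μ : Measure α} {ν : Measure β}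
  [SFinite μ] [SFinite ν] {f : α × β → ℝ}

-- If `f` is not integrable, neither is `y ↦ ∫ x, f (x, y) ∂μ`: both sides are the junk value `0`.
theorem integral_prod_symm_of_nonneg (hf : AEStronglyMeasurable f (μ.prod ν)) (hf₀ : 0 ≤ f)
    (hint : ∀ᵐ y ∂ν, Integrable (fun x ↦ f (x, y)) μ) :
    ∫ p, f p ∂μ.prod ν = ∫ y, ∫ x, f (x, y) ∂μ ∂ν := by
  by_cases h : Integrable f (μ.prod ν)
  · exact integral_prod_symm f h
  · have h_outer : ¬ Integrable (fun y ↦ ∫ x, f (x, y) ∂μ) ν := by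
      simpa only [integrable_prod_iff' hf, hint, true_and, norm_of_nonneg (hf₀ _)] using h
    rw [integral_undef h, integral_undef h_outer]

theorem setIntegral_fibrewise_of_nonneg {B : Set β} {S : β → Set α} (hB : MeasurableSet B)
    (hE : MeasurableSet {p : α × β | p.2 ∈ B ∧ p.1 ∈ S p.2})
    (hf : AEStronglyMeasurable f (μ.prod ν)) (hf₀ : ∀ y ∈ B, ∀ x ∈ S y, 0 ≤ f (x, y))
    (hint : ∀ y ∈ B, IntegrableOn (fun x ↦ f (x, y)) (S y) μ) :
    ∫ p in {p : α × β | p.2 ∈ B ∧ p.1 ∈ S p.2}, f p ∂μ.prod ν =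
      ∫ y in B, ∫ x in S y, f (x, y) ∂μ ∂ν := by
  set E := {p : α × β | p.2 ∈ B ∧ p.1 ∈ S p.2}
  have preimage_eq {y : β} (hy : y ∈ B) : (fun x ↦ (x, y)) ⁻¹' E = S y :=
    ext fun _ ↦ and_iff_right hy
  have hS {y : β} (hy : y ∈ B) : MeasurableSet (S y) :=
    preimage_eq hy ▸ measurable_prodMk_right hE
  have fibre_of_mem {y : β} (hy : y ∈ B) :
      (fun x ↦ E.indicator f (x, y)) = (S y).indicator fun x ↦ f (x, y) := by
    ext x
    rw [← preimage_eq hy]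
    exact (indicator_comp_right fun x ↦ (x, y)).symm
  have fibre_of_notMem {y : β} (hy : y ∉ B) : (fun x ↦ E.indicator f (x, y)) = 0 := by
    ext x
    exact indicator_of_notMem (fun h ↦ hy h.1) f
  have fibre_integrable (y : β) : Integrable (fun x ↦ E.indicator f (x, y)) μ := by
    by_cases hy : y ∈ B
    · rw [fibre_of_mem hy]
      exact (hint y hy).integrable_indicator (hS hy)
    · rw [fibre_of_notMem hy]
      exact integrable_zero α ℝ μ
  rw [← integral_indicator hE, ← integral_indicator hB, integral_prod_symm_of_nonneg
    (hf.indicator hE) (indicator_nonneg fun p hp ↦ hf₀ p.2 hp.1 p.1 hp.2)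
    (.of_forall fibre_integrable)]
  congr with y
  by_cases hy : y ∈ B
  · rw [fibre_of_mem hy, integral_indicator (hS hy), indicator_of_mem hy]
  · rw [fibre_of_notMem hy, indicator_of_notMem hy]
    exact integral_zero α ℝ

end FibrewiseIntegral

theorem setIntegral_Ioo_rpow {a b r : ℝ} (hab : a ≤ b) (hr : -1 < r) :
    ∫ x in Ioo a b, x ^ r = (b ^ (r + 1) - a ^ (r + 1)) / (r + 1) := by
  rw [← integral_Ioc_eq_integral_Ioo, ← intervalIntegral.integral_of_le hab,
    integral_rpow (.inl hr)]

/-- The minimum of the eight terms in `G`, with `N = n`, `S = s⁴`, `T = t⁴`, `U = u²`, `V = v²`. -/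
noncomputable def minTerms (N S T U V : ℝ) : ℝ :=
  min (min (min (N⁻¹ * S * U⁻¹ * V⁻¹) (N⁻¹ * T)) (min (S * U⁻¹) (T * V⁻¹)))
    (min (min (U⁻¹ * V⁻¹) U⁻¹) (min 1 V⁻¹))

theorem minTerms_eq_inv_mul {N S T U V : ℝ} (hN : 1 ≤ N) (hT : 0 ≤ T) (hTN : T ≤ N) (hU : 0 < U)
    (hU₁ : U ≤ 1) (hNV : N⁻¹ ≤ V) (hV₁ : V ≤ 1) (hS : U * V * T ≤ S) :
    minTerms N S T U V = N⁻¹ * T := by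
  have hN₀ : 0 < N := by linarith
  have hV : 0 < V := (inv_pos.2 hN₀).trans_le hNV
  have hUinv : 1 ≤ U⁻¹ := (one_le_inv₀ hU).2 hU₁
  have hVinv : 1 ≤ V⁻¹ := (one_le_inv₀ hV).2 hV₁
  have le_one : N⁻¹ * T ≤ 1 := (inv_mul_le_one₀ hN₀).2 hTN
  have hVT : V * T ≤ S * U⁻¹ := by
    rw [← div_eq_mul_inv, le_div_iff₀ hU]
    linarith
  have hTS : T ≤ S * U⁻¹ * V⁻¹ := by
    rw [← div_eq_mul_inv _ V, le_div_iff₀ hV]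
    linarith
  have le_first : N⁻¹ * T ≤ N⁻¹ * S * U⁻¹ * V⁻¹ := by
    simpa only [mul_assoc] using mul_le_mul_of_nonneg_left hTS (inv_pos.2 hN₀).le
  have le_third : N⁻¹ * T ≤ S * U⁻¹ := (mul_le_mul_of_nonneg_right hNV hT).trans hVT
  have le_fourth : N⁻¹ * T ≤ T * V⁻¹ := by
    rw [mul_comm]
    exact mul_le_mul_of_nonneg_left ((inv_le_one_of_one_le₀ hN).trans hVinv) hT
  have le_fifth : N⁻¹ * T ≤ U⁻¹ * V⁻¹ := le_one.trans (one_le_mul_of_one_le_of_one_le hUinv hVinv)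
  refine le_antisymm ((min_le_left _ _).trans <| (min_le_left _ _).trans (min_le_right _ _)) ?_
  exact le_min (le_min (le_min le_first le_rfl) (le_min le_third le_fourth))
    (le_min (le_min le_fifth (le_one.trans hUinv)) (le_min le_one (le_one.trans hVinv)))

theorem G_eq_minTerms (θ : ℝ) (n : ℕ) {s t u v : ℝ} (hu : 0 ≤ u) (hv : 0 ≤ v) :
    G θ n (s, t, u, v) =
      n ^ 2 * s ^ (-1 - 2 * θ) * t ^ (-1 - 2 * θ) * minTerms n (s ^ 4) (t ^ 4) (u ^ 2) (v ^ 2) := by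
  simp only [G, minTerms, rpow_neg hu, rpow_neg hv, rpow_ofNat]

theorem inv_le_sq_of_rpow_neg_half_le {x v : ℝ} (hx : 0 ≤ x) (h : x ^ (-(1 / 2) : ℝ) ≤ v) :
    x⁻¹ ≤ v ^ 2 := by
  calc x⁻¹ = (x ^ (-(1 / 2) : ℝ)) ^ 2 := by
        rw [← rpow_mul_natCast hx, ← rpow_neg_one]
        norm_num
    _ ≤ v ^ 2 := by gcongr

theorem pow_four_le_of_le_rpow_fourth {x t : ℝ} (hx : 0 ≤ x) (ht : 0 ≤ t)
    (h : t ≤ x ^ ((1 : ℝ) / 4)) : t ^ 4 ≤ x := by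
  calc t ^ 4 ≤ (x ^ ((1 : ℝ) / 4)) ^ 4 := by gcongr
    _ = x := by
        rw [← rpow_mul_natCast hx]
        norm_num

namespace A

/-- The product of intervals onto which `A n` projects under `(s, t, u, v) ↦ (t, u, v)`. -/
def base (n : ℕ) : Set (ℝ × ℝ × ℝ) :=
  Ioo 0 ((n : ℝ) ^ ((1 : ℝ) / 4)) ×ˢ Ioo 0 1 ×ˢ Ico ((n : ℝ) ^ (-(1 / 2) : ℝ)) 1

/-- The least admissible `s` over the point `(t, u, v)` of the base. -/
noncomputable def lowerBound (q : ℝ × ℝ × ℝ) : ℝ :=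
  q.2.1 ^ ((1 : ℝ) / 2) * q.2.2 ^ ((1 : ℝ) / 2) * q.1

variable {n : ℕ}

theorem pos_of_mem_base (hn : 0 < n) {t u v : ℝ} (h : (t, u, v) ∈ base n) :
    0 < t ∧ 0 < u ∧ 0 < v :=
  ⟨h.1.1, h.2.1.1, (rpow_pos_of_pos (Nat.cast_pos.2 hn) _).trans_le h.2.2.1⟩

theorem lowerBound_pos (hn : 0 < n) {q : ℝ × ℝ × ℝ} (hq : q ∈ base n) : 0 < lowerBound q := by
  obtain ⟨ht, hu, hv⟩ := pos_of_mem_base hn hq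
  exact mul_pos (mul_pos (rpow_pos_of_pos hu _) (rpow_pos_of_pos hv _)) ht

theorem lowerBound_pow_four {t u v : ℝ} (hu : 0 ≤ u) (hv : 0 ≤ v) :
    lowerBound (t, u, v) ^ 4 = u ^ 2 * v ^ 2 * t ^ 4 := by
  simp only [lowerBound, mul_pow, ← rpow_mul_natCast hu, ← rpow_mul_natCast hv]
  norm_num

theorem lowerBound_rpow_neg_two_mul (θ : ℝ) {t u v : ℝ} (ht : 0 ≤ t) (hu : 0 ≤ u) (hv : 0 ≤ v) :
    lowerBound (t, u, v) ^ (-2 * θ) = u ^ (-θ) * v ^ (-θ) * t ^ (-2 * θ) := by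
  rw [lowerBound, mul_rpow (by positivity) ht, mul_rpow (by positivity) (by positivity),
    ← rpow_mul hu, ← rpow_mul hv, show (1 : ℝ) / 2 * (-2 * θ) = -θ by ring]

theorem eq_setOf_mem_base_and_lowerBound_le (hn : 0 < n) :
    A n = {p | p.2 ∈ base n ∧ p.1 ∈ Ici (lowerBound p.2)} := by
  ext ⟨s, t, u, v⟩
  constructor
  · rintro ⟨-, ht, hu, -, hu₁, hnv, hv₁, htn, hs⟩
    exact ⟨⟨⟨ht, htn⟩, ⟨hu, hu₁⟩, hnv, hv₁⟩, hs⟩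
  · rintro ⟨hq, hs⟩
    obtain ⟨ht, hu, hv⟩ := pos_of_mem_base hn hq
    exact ⟨(lowerBound_pos hn hq).trans_le hs, ht, hu, hv, hq.2.1.2, hq.2.2.1, hq.2.2.2, hq.1.2, hs⟩

theorem measurableSet_base (n : ℕ) : MeasurableSet (base n) :=
  measurableSet_Ioo.prod (measurableSet_Ioo.prod measurableSet_Ico)

theorem measurableSet (hn : 0 < n) : MeasurableSet (A n) := by
  rw [eq_setOf_mem_base_and_lowerBound_le hn]
  refine (measurable_snd (measurableSet_base n)).inter (measurableSet_le ?_ measurable_fst)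
  unfold lowerBound
  fun_prop

theorem G_eq_of_mem (hn : 0 < n) (θ : ℝ) {p : ℝ × ℝ × ℝ × ℝ} (hp : p ∈ A n) :
    G θ n p = n * p.1 ^ (-1 - 2 * θ) * p.2.1 ^ (3 - 2 * θ) := by
  obtain ⟨s, t, u, v⟩ := p
  obtain ⟨hs, ht, hu, hv, hu₁, hnv, hv₁, htn, hst⟩ := hp
  dsimp only at hs ht hu hv hu₁ hnv hv₁ htn hst
  have hS : u ^ 2 * v ^ 2 * t ^ 4 ≤ s ^ 4 := by
    rw [← lowerBound_pow_four hu.le hv.le]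
    exact pow_le_pow_left₀ (by positivity) hst 4
  have ht_add : t ^ (3 - 2 * θ) = t ^ (-1 - 2 * θ) * t ^ 4 := by
    rw [← rpow_add_natCast ht.ne']
    congr 1
    push_cast
    ring
  rw [G_eq_minTerms θ n hu.le hv.le, minTerms_eq_inv_mul (Nat.one_le_cast.2 hn) (by positivity)
    (pow_four_le_of_le_rpow_fourth n.cast_nonneg ht.le htn.le) (by positivity)
    (pow_le_one₀ hu.le hu₁.le) (inv_le_sq_of_rpow_neg_half_le n.cast_nonneg hnv)
    (pow_le_one₀ hv.le hv₁.le) hS, ht_add]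
  field_simp

variable {θ : ℝ}

theorem integral_fibre (hn : 0 < n) (hθ : 0 < θ) {q : ℝ × ℝ × ℝ} (hq : q ∈ base n) :
    ∫ s in Ici (lowerBound q), n * s ^ (-1 - 2 * θ) * q.1 ^ (3 - 2 * θ) =
      n / (2 * θ) * (q.1 ^ (3 - 4 * θ) * (q.2.1 ^ (-θ) * q.2.2 ^ (-θ))) := by
  obtain ⟨t, u, v⟩ := q
  obtain ⟨ht, hu, hv⟩ := pos_of_mem_base hn hq
  rw [integral_mul_const, integral_const_mul, integral_Ici_eq_integral_Ioi,
    integral_Ioi_rpow_of_lt (by linarith) (lowerBound_pos hn hq),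
    show -1 - 2 * θ + 1 = -2 * θ by ring, lowerBound_rpow_neg_two_mul θ ht.le hu.le hv.le,
    show 3 - 4 * θ = -2 * θ + (3 - 2 * θ) by ring, rpow_add ht]
  field_simp

theorem setIntegral_G_eq_setIntegral_base (hn : 0 < n) (hθ : 0 < θ) :
    ∫ p in A n, G θ n p =
      ∫ q in base n, n / (2 * θ) * (q.1 ^ (3 - 4 * θ) * (q.2.1 ^ (-θ) * q.2.2 ^ (-θ))) := by
  have hA := eq_setOf_mem_base_and_lowerBound_le hn
  rw [setIntegral_congr_fun (measurableSet hn) fun p hp ↦ G_eq_of_mem hn θ hp, hA,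
    Measure.volume_eq_prod, setIntegral_fibrewise_of_nonneg (S := fun q ↦ Ici (lowerBound q))
      (measurableSet_base n) (hA ▸ measurableSet hn)
      (Measurable.aestronglyMeasurable (by fun_prop)) ?nonneg ?integrable]
  case nonneg =>
    intro q hq s hs
    have hs₀ : 0 < s := (lowerBound_pos hn hq).trans_le hs
    have ht : 0 < q.1 := hq.1.1
    positivity
  case integrable =>
    intro q hq
    have hpow : IntegrableOn (fun s : ℝ ↦ s ^ (-1 - 2 * θ)) (Ici (lowerBound q)) :=
      (integrableOn_Ici_iff_integrableOn_Ioi (by finiteness)).2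
        (integrableOn_Ioi_rpow_of_lt (by linarith) (lowerBound_pos hn hq))
    exact (hpow.const_mul (n : ℝ)).mul_const (q.1 ^ (3 - 2 * θ))
  exact setIntegral_congr_fun (measurableSet_base n) fun q hq ↦ integral_fibre hn hθ hq

theorem setIntegral_base_mul (n : ℕ) (f g h : ℝ → ℝ) :
    ∫ q in base n, f q.1 * (g q.2.1 * h q.2.2) =
      (∫ t in Ioo 0 ((n : ℝ) ^ ((1 : ℝ) / 4)), f t) *
        ((∫ u in Ioo 0 1, g u) * ∫ v in Ico ((n : ℝ) ^ (-(1 / 2) : ℝ)) 1, h v) := by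
  rw [base, Measure.volume_eq_prod,
    setIntegral_prod_mul f (fun q : ℝ × ℝ ↦ g q.1 * h q.2), Measure.volume_eq_prod,
    setIntegral_prod_mul g h]

theorem setIntegral_G (hn : 0 < n) (hθ : 0 < θ) (hθ₁ : θ < 1) :
    ∫ p in A n, G θ n p =
      (1 - (√((n : ℝ) ^ (1 - θ)))⁻¹) / 8 *
        ((n : ℝ) ^ (2 - θ) * θ ^ (-1 : ℝ) * (1 - θ) ^ (-3 : ℝ)) := by
  have hn₀ : (0 : ℝ) < n := Nat.cast_pos.2 hn
  have hθ' : 0 < 1 - θ := sub_pos.2 hθ₁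
  have ht : ∫ t in Ioo 0 ((n : ℝ) ^ ((1 : ℝ) / 4)), t ^ (3 - 4 * θ) =
      (n : ℝ) ^ (1 - θ) / (4 * (1 - θ)) := by
    rw [setIntegral_Ioo_rpow (by positivity) (by linarith), ← rpow_mul hn₀.le,
      show 3 - 4 * θ + 1 = 4 * (1 - θ) by ring, zero_rpow (by positivity), sub_zero,
      ← mul_assoc, one_div_mul_cancel four_ne_zero, one_mul]
  have hu : ∫ u in Ioo (0 : ℝ) 1, u ^ (-θ) = 1 / (1 - θ) := by
    rw [setIntegral_Ioo_rpow zero_le_one (by linarith), neg_add_eq_sub, one_rpow,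
      zero_rpow hθ'.ne', sub_zero]
  have hv : ∫ v in Ico ((n : ℝ) ^ (-(1 / 2) : ℝ)) 1, v ^ (-θ) =
      (1 - (√((n : ℝ) ^ (1 - θ)))⁻¹) / (1 - θ) := by
    have hle : (n : ℝ) ^ (-(1 / 2) : ℝ) ≤ 1 :=
      rpow_le_one_of_one_le_of_nonpos (Nat.one_le_cast.2 hn) (by norm_num)
    rw [integral_Ico_eq_integral_Ioo, setIntegral_Ioo_rpow hle (by linarith), neg_add_eq_sub,
      one_rpow, sqrt_eq_rpow, ← rpow_neg (by positivity), ← rpow_mul hn₀.le,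
      ← rpow_mul hn₀.le, mul_comm (1 - θ)]
  have hpow : (n : ℝ) ^ (2 - θ) = n * (n : ℝ) ^ (1 - θ) := by
    rw [← rpow_one_add' hn₀.le (by linarith)]
    ring_nf
  rw [setIntegral_G_eq_setIntegral_base hn hθ, integral_const_mul,
    setIntegral_base_mul n (· ^ (3 - 4 * θ)) (· ^ (-θ)) (· ^ (-θ)), ht, hu, hv, hpow,
    rpow_neg_one, rpow_neg hθ'.le, rpow_ofNat]
  field_simp
  ring

end A

theorem stmt_9 :
    (∃ C : ℝ, 0 < C ∧ ∀ θ : ℝ, 0 < θ → θ < 1 → ∀ n : ℕ, 0 < n →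
      (∫ p in A n, G θ n p) ≤ C * ((n : ℝ) ^ (2 - θ) * θ ^ (-1 : ℝ) * (1 - θ) ^ (-3 : ℝ))) ∧
    (∃ c : ℝ, 0 < c ∧ ∀ θ : ℝ, 0 < θ → θ < 1 → ∀ n : ℕ, 0 < n →
      (8 : ℝ) ≤ (n : ℝ) ^ (1 - θ) →
      c * ((n : ℝ) ^ (2 - θ) * θ ^ (-1 : ℝ) * (1 - θ) ^ (-3 : ℝ)) ≤ ∫ p in A n, G θ n p) := by
  have nonneg {θ : ℝ} (hθ : 0 < θ) (hθ₁ : θ < 1) (n : ℕ) :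
      0 ≤ (n : ℝ) ^ (2 - θ) * θ ^ (-1 : ℝ) * (1 - θ) ^ (-3 : ℝ) := by
    have : 0 < 1 - θ := sub_pos.2 hθ₁
    positivity
  refine ⟨⟨1 / 8, by norm_num, fun θ hθ hθ₁ n hn ↦ ?_⟩,
    ⟨1 / 16, by norm_num, fun θ hθ hθ₁ n hn h8 ↦ ?_⟩⟩
  · rw [A.setIntegral_G hn hθ hθ₁]
    refine mul_le_mul_of_nonneg_right ?_ (nonneg hθ hθ₁ n)
    have : 0 ≤ (√((n : ℝ) ^ (1 - θ)))⁻¹ := by positivity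
    linarith
  · rw [A.setIntegral_G hn hθ hθ₁]
    refine mul_le_mul_of_nonneg_right ?_ (nonneg hθ hθ₁ n)
    have two_le : 2 ≤ √((n : ℝ) ^ (1 - θ)) := le_sqrt_of_sq_le (by linarith)
    have : (√((n : ℝ) ^ (1 - θ)))⁻¹ ≤ 2⁻¹ := inv_anti₀ two_pos two_le
    linarith
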